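/- (Key inequality) Let f be a nonzero smooth compactly supported function on ℝⁿ, p > 1. With C_f*, C_f, K_f, L_f as defined, and Z_p(f) = (∫_{S^{n-1}} ‖∇_ξ f‖_p^{-n} dξ)^{-1/n}, one has vol(K_f)^{-p/n} · ∫_{ℝⁿ} C_f*(∇f(x)) dx ≤ a₂ Z_p(f)^p, where a₂ = ℓ_q n^{(n+p)/n} / (a₁ (n+p)), assuming the L_p Busemann-Petty centroid inequality vol(Γ_p K) ≥ vol(K). -/

import Mathlib

open MeasureTheory Real
open scoped RealInnerProductSpace Pointwise

noncomputable section

/-- `ω_s = π^(s/2) / Γ(s/2 + 1)`. -/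
def omegaR (s : ℝ) : ℝ := Real.pi ^ (s / 2) / Real.Gamma (s / 2 + 1)

/-- `a₁ = ω_{n+p} / (ω₂ ω_n ω_{p-1})`. -/
def aOne (n : ℕ) (p : ℝ) : ℝ := omegaR (n + p) / (omegaR 2 * omegaR n * omegaR (p - 1))

/-- The `L^p` norm of the directional derivative `∇_ξ f = ⟨∇f, ξ⟩`. -/
def dirDerivLpNorm (n : ℕ) (p : ℝ) (f : EuclideanSpace ℝ (Fin n) → ℝ)
    (ξ : EuclideanSpace ℝ (Fin n)) : ℝ :=
  (∫ y, |⟪gradient f y, ξ⟫| ^ p) ^ (1 / p)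

/-- `C_f*(x) = ∫_{S^{n-1}} ‖∇_ξ f‖_p^{-(n+p)} |⟨x, ξ⟩|^p dξ`. -/
def Cfstar (n : ℕ) (p : ℝ) (f : EuclideanSpace ℝ (Fin n) → ℝ)
    (x : EuclideanSpace ℝ (Fin n)) : ℝ :=
  ∫ ξ : Metric.sphere (0 : EuclideanSpace ℝ (Fin n)) 1,
    dirDerivLpNorm n p f ξ ^ (-(n + p : ℝ)) * |⟪x, (ξ : EuclideanSpace ℝ (Fin n))⟫| ^ p
      ∂(volume : Measure (EuclideanSpace ℝ (Fin n))).toSphere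

/-- The Legendre transform. -/
def legendre {n : ℕ} (C : EuclideanSpace ℝ (Fin n) → ℝ) (x : EuclideanSpace ℝ (Fin n)) : ℝ :=
  ⨆ y : EuclideanSpace ℝ (Fin n), (⟪x, y⟫ - C y)

/-- The `L_p`-centroid body `Γ_p L`, described through its support function
`h_{Γ_p L}(v) = ((1/(a₁ vol(L))) ∫_L |⟨v, x⟩|^p dx)^{1/p}`. -/
def centroidBody (n : ℕ) (p : ℝ) (L : Set (EuclideanSpace ℝ (Fin n))) :
    Set (EuclideanSpace ℝ (Fin n)) :=
  {x | ∀ v : EuclideanSpace ℝ (Fin n),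
    ⟪x, v⟫ ≤ ((aOne n p * (volume L).toReal)⁻¹ * ∫ y in L, |⟪v, y⟫| ^ p) ^ (1 / p)}


/-- `Z_p(f) = (∫_{S^{n-1}} ‖∇_ξ f‖_p^{-n} dξ)^{-1/n}`. -/
def Zp (n : ℕ) (p : ℝ) (f : EuclideanSpace ℝ (Fin n) → ℝ) : ℝ :=
  (∫ ξ : Metric.sphere (0 : EuclideanSpace ℝ (Fin n)) 1,
      dirDerivLpNorm n p f ξ ^ (-(n : ℝ))
        ∂(volume : Measure (EuclideanSpace ℝ (Fin n))).toSphere) ^ (-(1 / (n : ℝ)))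

/-!
In polar coordinates `C_f*(v) = (n + p) ∫_{L_f} |⟨v, y⟩|^p dy`, which is a constant `c` times the
`p`-th power of the support function of `Γ_p L_f`. By Young's inequality and its equality case the
sublevel set `K_f` of the Legendre transform is therefore exactly the dilate `λ Γ_p L_f` with
`λ = q^(1/q) (c p)^(1/p)`. By Fubini, and polar coordinates again,
`∫ C_f*(∇f) = Z_p(f)^(-n) = n vol(L_f)`, so the inequality is the `L_p` Busemann-Petty centroid
inequality for the single body `L_f`, raised to the power `-p/n`.
-/

section PolarCoordinates

lemma integral_Ioi_indicator_sublevel_of_homogeneous {E : Type*} [AddCommGroup E] [Module ℝ E]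
    {N F : E → ℝ} {d : ℕ} {s : ℝ} (hd : 0 < d) (hs : 0 < d + s)
    (hN : ∀ r : ℝ, 0 < r → ∀ x, N (r • x) = r * N x)
    (hF : ∀ r : ℝ, 0 < r → ∀ x, F (r • x) = r ^ s * F x) {ξ : E} (hξ : 0 < N ξ) :
    ∫ r in Set.Ioi (0 : ℝ), r ^ (d - 1) * {y | N y ≤ 1}.indicator F (r • ξ) =
      (d + s)⁻¹ * (N ξ ^ (-(d + s)) * F ξ) := by
  have hmem {r : ℝ} (hr : 0 < r) : r • ξ ∈ {y | N y ≤ 1} ↔ r ∈ Set.Ioc 0 (N ξ)⁻¹ := by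
    rw [Set.mem_ofPred_eq, hN r hr, Set.mem_Ioc, ← one_div, le_div_iff₀ hξ]
    simp only [hr, true_and]
  have hpow {r : ℝ} (hr : 0 < r) : r ^ (d - 1) * r ^ s = r ^ (d + s - 1) := by
    rw [← Real.rpow_natCast, ← Real.rpow_add hr, Nat.cast_pred hd]
    ring_nf
  calc
    _ = ∫ r in Set.Ioi (0 : ℝ),
          (Set.Ioc 0 (N ξ)⁻¹).indicator (fun r => r ^ (d + s - 1) * F ξ) r := by
      refine setIntegral_congr_fun measurableSet_Ioi fun r (hr : 0 < r) => ?_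
      by_cases h : r ∈ Set.Ioc 0 (N ξ)⁻¹
      · rw [Set.indicator_of_mem h, Set.indicator_of_mem ((hmem hr).2 h), hF r hr, ← mul_assoc,
          hpow hr]
      · rw [Set.indicator_of_notMem h, Set.indicator_of_notMem (mt (hmem hr).1 h), mul_zero]
    _ = ∫ r in (0 : ℝ)..(N ξ)⁻¹, r ^ (d + s - 1) * F ξ := by
      rw [setIntegral_indicator measurableSet_Ioc, Set.inter_eq_right.2 Set.Ioc_subset_Ioi_self,
        intervalIntegral.integral_of_le (inv_pos.2 hξ).le]
    _ = _ := by
      rw [intervalIntegral.integral_mul_const, integral_rpow (Or.inl (by linarith)),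
        Real.inv_rpow hξ.le, Real.rpow_neg hξ.le, sub_add_cancel, Real.zero_rpow hs.ne']
      ring

variable {E : Type*} [NormedAddCommGroup E] [NormedSpace ℝ E] [MeasurableSpace E] [BorelSpace E]
  [FiniteDimensional ℝ E] [Nontrivial E] (μ : Measure E) [μ.IsAddHaarMeasure]

lemma integral_eq_integral_toSphere_integral_Ioi {g : E → ℝ} (hg : Integrable g μ) :
    ∫ x, g x ∂μ = ∫ ξ : Metric.sphere (0 : E) 1, (∫ r in Set.Ioi (0 : ℝ),
      r ^ (Module.finrank ℝ E - 1) * g (r • (ξ : E))) ∂μ.toSphere := by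
  set d := Module.finrank ℝ E
  have hmp := μ.measurePreserving_homeomorphUnitSphereProd
  have hemb := (homeomorphUnitSphereProd E).measurableEmbedding
  have hcompl : MeasurableSet ({0}ᶜ : Set E) := (measurableSet_singleton _).compl
  let G : Metric.sphere (0 : E) 1 × Set.Ioi (0 : ℝ) → ℝ := fun z => g ((z.2 : ℝ) • (z.1 : E))
  have hG (x : ({0}ᶜ : Set E)) : G (homeomorphUnitSphereProd E x) = g x := by
    simp only [G, ← homeomorphUnitSphereProd_symm_apply_coe, Homeomorph.symm_apply_apply]
  have hint : Integrable G (μ.toSphere.prod (.volumeIoiPow (d - 1))) := by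
    rw [← hmp.integrable_comp_emb hemb]
    exact ((integrableOn_iff_comap_subtypeVal hcompl).1 hg.integrableOn).congr
      (.of_forall fun x => (hG x).symm)
  have hradial (F : ℝ → ℝ) : ∫ r : Set.Ioi (0 : ℝ), F r ∂(.volumeIoiPow (d - 1)) =
      ∫ r in Set.Ioi (0 : ℝ), r ^ (d - 1) * F r := by
    simp only [Measure.volumeIoiPow, ENNReal.ofReal]
    rw [integral_withDensity_eq_integral_smul (measurable_subtype_coe.pow_const _).real_toNNReal,
      integral_subtype_comap measurableSet_Ioi fun r => Real.toNNReal (r ^ (d - 1)) • F r]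
    refine setIntegral_congr_fun measurableSet_Ioi fun r (hr : 0 < r) => ?_
    simp only [NNReal.smul_def, Real.coe_toNNReal _ (pow_nonneg hr.le _), smul_eq_mul]
  calc
    ∫ x, g x ∂μ = ∫ x : ({0}ᶜ : Set E), g x ∂(μ.comap (↑)) := by
      rw [integral_subtype_comap hcompl g, restrict_compl_singleton]
    _ = ∫ z, G z ∂(μ.toSphere.prod (.volumeIoiPow (d - 1))) := by
      rw [← hmp.integral_comp hemb]
      simp only [hG]
    _ = ∫ ξ, (∫ r, G (ξ, r) ∂(.volumeIoiPow (d - 1))) ∂μ.toSphere := integral_prod _ hint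
    _ = _ := integral_congr_ae (.of_forall fun ξ => hradial fun r => g (r • (ξ : E)))

lemma setIntegral_sublevel_of_homogeneous {N F : E → ℝ} {s : ℝ}
    (hs : 0 < Module.finrank ℝ E + s) (hNpos : ∀ x, x ≠ 0 → 0 < N x)
    (hN : ∀ r : ℝ, 0 < r → ∀ x, N (r • x) = r * N x)
    (hF : ∀ r : ℝ, 0 < r → ∀ x, F (r • x) = r ^ s * F x)
    (hmeas : MeasurableSet {y | N y ≤ 1}) (hint : IntegrableOn F {y | N y ≤ 1} μ) :
    ∫ y in {y | N y ≤ 1}, F y ∂μ = (Module.finrank ℝ E + s)⁻¹ *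
      ∫ ξ : Metric.sphere (0 : E) 1, N ξ ^ (-(Module.finrank ℝ E + s)) * F ξ ∂μ.toSphere := by
  rw [← integral_indicator hmeas,
    integral_eq_integral_toSphere_integral_Ioi μ ((integrable_indicator_iff hmeas).2 hint),
    ← integral_const_mul]
  exact integral_congr_ae (.of_forall fun ξ =>
    integral_Ioi_indicator_sublevel_of_homogeneous Module.finrank_pos hs hN hF
      (hNpos _ (ne_zero_of_mem_unit_sphere ξ)))

end PolarCoordinates

section DefiniteSeminorm

variable {E : Type*} [NormedAddCommGroup E] [NormedSpace ℝ E] [FiniteDimensional ℝ E]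
  (N : Seminorm ℝ E)

lemma continuous_seminorm_of_finiteDimensional : Continuous N :=
  N.convexOn.locallyLipschitz.continuous

variable {N}

lemma exists_pos_mul_norm_le_seminorm (hN : ∀ x, N x = 0 → x = 0) :
    ∃ m > 0, ∀ x, m * ‖x‖ ≤ N x := by
  have hpos {x : E} (hx : x ≠ 0) : 0 < N x := (apply_nonneg N x).lt_of_ne' (mt (hN x) hx)
  rcases subsingleton_or_nontrivial E with _ | _
  · exact ⟨1, one_pos, fun x => by simp [Subsingleton.elim x 0]⟩
  obtain ⟨ξ, hξ, hmin⟩ := (isCompact_sphere (0 : E) 1).exists_isMinOn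
    (NormedSpace.sphere_nonempty.2 zero_le_one)
    (continuous_seminorm_of_finiteDimensional N).continuousOn
  refine ⟨N ξ, hpos (ne_zero_of_mem_unit_sphere ⟨ξ, hξ⟩), fun x => ?_⟩
  rcases eq_or_ne x 0 with rfl | hx
  · simp
  have hx' : 0 < ‖x‖ := norm_pos_iff.2 hx
  have h : N ξ ≤ N (‖x‖⁻¹ • x) := hmin (by simp [norm_smul, hx'.ne'])
  rwa [map_smul_eq_mul, norm_inv, norm_norm, inv_mul_eq_div, le_div_iff₀ hx'] at h

lemma isCompact_seminorm_closedBall_zero (hN : ∀ x, N x = 0 → x = 0) (r : ℝ) :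
    IsCompact (N.closedBall 0 r) := by
  obtain ⟨m, hm, hle⟩ := exists_pos_mul_norm_le_seminorm hN
  rw [N.closedBall_zero_eq]
  refine Metric.isCompact_of_isClosed_isBounded
    (isClosed_le (continuous_seminorm_of_finiteDimensional N) continuous_const)
    (isBounded_iff_forall_norm_le.2 ⟨r / m, fun x (hx : N x ≤ r) => ?_⟩)
  rw [le_div_iff₀' hm]
  exact (hle x).trans hx

end DefiniteSeminorm

section LpInner

variable {α E : Type*} [MeasurableSpace α] {μ : Measure α} [NormedAddCommGroup E]
  [InnerProductSpace ℝ E] {g : α → E}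

/-- The seminorm `ξ ↦ ‖⟨g, ξ⟩‖_{L^p(μ)}` attached to a vector-valued function `g ∈ L^p(μ; E)`. It is
`ξ ↦ ‖∇_ξ f‖_p` for `g = ∇f`, and the support function of `Γ_p L`, up to a factor, for `g = id`
and `μ` the Lebesgue measure on `L`. -/
def lpInnerSeminorm {p : ENNReal} (hp : 1 ≤ p) (hg : MemLp g p μ) : Seminorm ℝ E :=
  Seminorm.of (fun ξ => lpNorm (fun y => ⟪g y, ξ⟫) p μ)
    (fun ξ η => by
      simp only [inner_add_right]
      exact lpNorm_add_le (hg.inner_const ξ) hp)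
    (fun a ξ => by
      simp only [inner_smul_right]
      exact lpNorm_const_smul a (fun y => ⟪g y, ξ⟫) μ)

lemma lpInnerSeminorm_ofReal_apply {p : ℝ} (hp : 1 ≤ ENNReal.ofReal p)
    (hg : MemLp g (ENNReal.ofReal p) μ) (ξ : E) :
    lpInnerSeminorm hp hg ξ = (∫ y, |⟪g y, ξ⟫| ^ p ∂μ) ^ (1 / p) := by
  have hp0 : 0 < p := ENNReal.ofReal_pos.1 (one_pos.trans_le hp)
  have h := lpNorm_eq_integral_norm_rpow_toReal (one_pos.trans_le hp).ne' ENNReal.ofReal_ne_top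
    (hg.inner_const ξ : MemLp (fun y => ⟪g y, ξ⟫) _ μ).1
  simp only [ENNReal.toReal_ofReal hp0.le, Real.norm_eq_abs, ← one_div] at h
  exact h

lemma lpInnerSeminorm_eq_zero_iff {p : ENNReal} (hp : 1 ≤ p) (hg : MemLp g p μ) {ξ : E} :
    lpInnerSeminorm hp hg ξ = 0 ↔ ∀ᵐ y ∂μ, ⟪g y, ξ⟫ = 0 :=
  lpNorm_eq_zero (hg.inner_const ξ) (one_pos.trans_le hp).ne'

end LpInner

section YoungInequality

variable {p q c s : ℝ}

/-- The slope `s` at which `sup_t (s t - c t^p)`, the Legendre transform of `t ↦ c t^p`,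
equals `1`; here `q` is the exponent conjugate to `p`. -/
def legendreRadius (p q c : ℝ) : ℝ := q ^ (1 / q) * (c * p) ^ (1 / p)

lemma legendreRadius_pos (hp : 0 < p) (hq : 0 < q) (hc : 0 < c) : 0 < legendreRadius p q c :=
  mul_pos (Real.rpow_pos_of_pos hq _) (Real.rpow_pos_of_pos (mul_pos hc hp) _)

lemma legendreRadius_rpow (hp : 0 < p) (hq : 0 < q) (hc : 0 < c) :
    legendreRadius p q c ^ p = q ^ (p / q) * (c * p) := by
  have hcp : 0 < c * p := mul_pos hc hp
  rw [legendreRadius, Real.mul_rpow (by positivity) (by positivity), ← Real.rpow_mul hq.le,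
    ← Real.rpow_mul hcp.le, one_div_mul_eq_div, one_div_mul_cancel hp.ne', Real.rpow_one]

lemma legendreRadius_pow_mul_rpow {n : ℕ} {V : ℝ} (hn : n ≠ 0) (hp : 0 < p) (hq : 0 < q)
    (hc : 0 < c) (hV : 0 ≤ V) :
    (legendreRadius p q c ^ n * V) ^ (-(p / n)) =
      q ^ (-(p / q)) * (c * p)⁻¹ * V ^ (-(p / n)) := by
  have hlam := legendreRadius_pos hp hq hc
  rw [Real.mul_rpow (by positivity) hV, ← Real.rpow_natCast, ← Real.rpow_mul hlam.le, mul_neg,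
    mul_div_cancel₀ _ (Nat.cast_ne_zero.2 hn), Real.rpow_neg hlam.le,
    legendreRadius_rpow hp hq hc, mul_inv, Real.rpow_neg hq.le]

lemma mul_sub_const_mul_rpow_le (hpq : p.HolderConjugate q) (hc : 0 < c) (hs : 0 ≤ s) {t : ℝ}
    (ht : 0 ≤ t) : t * s - c * t ^ p ≤ (s / (c * p) ^ (1 / p)) ^ q / q := by
  have hp := hpq.pos
  have hcp : 0 < (c * p) ^ (1 / p) := Real.rpow_pos_of_pos (mul_pos hc hp) _
  have h := Real.young_inequality_of_nonneg (a := (c * p) ^ (1 / p) * t) (by positivity)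
    (div_nonneg hs hcp.le) hpq
  rw [Real.mul_rpow hcp.le ht, ← Real.rpow_mul (by positivity), one_div_mul_cancel hp.ne',
    Real.rpow_one] at h
  field_simp at h ⊢
  linarith

lemma mul_sub_const_mul_rpow_le_one_iff (hpq : p.HolderConjugate q) (hc : 0 < c) :
    (∀ t > 0, t * s - c * t ^ p ≤ 1) ↔ s ≤ legendreRadius p q c := by
  have hp := hpq.pos
  have hq := hpq.symm.pos
  have hlam := legendreRadius_pos hp hq hc
  have hcp : 0 < (c * p) ^ (1 / p) := Real.rpow_pos_of_pos (mul_pos hc hp) _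
  constructor
  · intro h
    -- the equality case of Young's inequality
    set t := (q / (c * p)) ^ (1 / p) with ht
    have ht0 : 0 < t := by positivity
    have htp : c * t ^ p = q - 1 := by
      rw [ht, ← Real.rpow_mul (by positivity), one_div_mul_cancel hp.ne', Real.rpow_one,
        ← hpq.symm.div_conj_eq_sub_one]
      field_simp
    have htlam : t * legendreRadius p q c = q := by
      rw [ht, legendreRadius, Real.div_rpow hq.le (by positivity)]
      calc _ = q ^ (1 / p) * q ^ (1 / q) := by field_simp
        _ = q := by
          rw [← Real.rpow_add hq, one_div, one_div, hpq.inv_add_inv_eq_one, Real.rpow_one]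
    have := h t ht0
    exact le_of_mul_le_mul_left (by linarith) ht0
  · intro h t ht
    calc t * s - c * t ^ p ≤ t * legendreRadius p q c - c * t ^ p := by gcongr
      _ ≤ (legendreRadius p q c / (c * p) ^ (1 / p)) ^ q / q :=
        mul_sub_const_mul_rpow_le hpq hc hlam.le ht.le
      _ = 1 := by
        rw [legendreRadius, mul_div_cancel_right₀ _ hcp.ne', ← Real.rpow_mul hq.le,
          one_div_mul_cancel hq.ne', Real.rpow_one, div_self hq.ne']

end YoungInequality

section Legendre

variable {n : ℕ} {p q c m : ℝ} {h : EuclideanSpace ℝ (Fin n) → ℝ}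

lemma bddAbove_range_inner_sub_const_mul_rpow (hpq : p.HolderConjugate q) (hc : 0 < c) (hm : 0 < m)
    (hcoer : ∀ v, m * ‖v‖ ≤ h v) (x : EuclideanSpace ℝ (Fin n)) :
    BddAbove (Set.range fun v => ⟪x, v⟫ - c * h v ^ p) := by
  refine ⟨(‖x‖ / m / (c * p) ^ (1 / p)) ^ q / q, Set.forall_mem_range.2 fun v => ?_⟩
  have hh : 0 ≤ h v := (by positivity : 0 ≤ m * ‖v‖).trans (hcoer v)
  have hinner : ⟪x, v⟫ ≤ h v * (‖x‖ / m) :=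
    calc ⟪x, v⟫ ≤ ‖x‖ * ‖v‖ := real_inner_le_norm x v
      _ = m * ‖v‖ * (‖x‖ / m) := by field_simp
      _ ≤ h v * (‖x‖ / m) := by gcongr; exact hcoer v
  exact (sub_le_sub_right hinner _).trans
    (mul_sub_const_mul_rpow_le hpq hc (by positivity) hh)

lemma legendre_const_mul_rpow_le_one_iff (hpq : p.HolderConjugate q) (hc : 0 < c) (hm : 0 < m)
    (hcoer : ∀ v, m * ‖v‖ ≤ h v) (hhom : ∀ t : ℝ, 0 < t → ∀ v, h (t • v) = t * h v)
    {x : EuclideanSpace ℝ (Fin n)} :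
    legendre (fun v => c * h v ^ p) x ≤ 1 ↔ ∀ v, ⟪x, v⟫ ≤ legendreRadius p q c * h v := by
  have hpos {v : EuclideanSpace ℝ (Fin n)} (hv : v ≠ 0) : 0 < h v :=
    (mul_pos hm (norm_pos_iff.2 hv)).trans_le (hcoer v)
  have h0 : 0 ≤ h 0 := by simpa using hcoer 0
  have hlam := legendreRadius_pos hpq.pos hpq.symm.pos hc
  rw [legendre, ciSup_le_iff (bddAbove_range_inner_sub_const_mul_rpow hpq hc hm hcoer x)]
  constructor
  · intro hle v
    rcases eq_or_ne v 0 with rfl | hv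
    · simpa only [inner_zero_right] using mul_nonneg hlam.le h0
    rw [← div_le_iff₀ (hpos hv), ← mul_sub_const_mul_rpow_le_one_iff hpq hc]
    intro t ht
    have hray := hle ((t / h v) • v)
    rwa [hhom _ (div_pos ht (hpos hv)), inner_smul_right, div_mul_cancel₀ _ (hpos hv).ne',
      div_mul_eq_mul_div, mul_div_assoc] at hray
  · intro hle v
    rcases eq_or_ne v 0 with rfl | hv
    · rw [inner_zero_right]
      linarith [mul_nonneg hc.le (Real.rpow_nonneg h0 p)]
    have hray := (mul_sub_const_mul_rpow_le_one_iff hpq hc).2 ((div_le_iff₀ (hpos hv)).2 (hle v))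
      (h v) (hpos hv)
    rwa [mul_div_cancel₀ _ (hpos hv).ne'] at hray

end Legendre

section CentroidBody

variable {E : Type*} [NormedAddCommGroup E] [MeasurableSpace E] {μ : Measure E} {K : Set E}

lemma memLp_id_restrict_of_isCompact [BorelSpace E] [IsFiniteMeasureOnCompacts μ]
    (hK : IsCompact K) (p : ENNReal) : MemLp id p (μ.restrict K) := by
  obtain ⟨R, hR⟩ := hK.isBounded.exists_norm_le
  have : IsFiniteMeasure (μ.restrict K) := isFiniteMeasure_restrict.2 hK.measure_ne_top
  exact .of_bound (continuousOn_id.aestronglyMeasurable_of_isCompact hK hK.measurableSet) R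
    (ae_restrict_of_forall_mem hK.measurableSet hR)

lemma eq_zero_of_ae_inner_eq_zero [InnerProductSpace ℝ E] [μ.IsOpenPosMeasure]
    (hK : (interior K).Nonempty) {v : E} (hv : ∀ᵐ y ∂μ.restrict K, ⟪y, v⟫ = 0) : v = 0 := by
  have hcont : Continuous fun y : E => ⟪y, v⟫ := continuous_id.inner continuous_const
  have hzero : Set.EqOn (fun y => ⟪y, v⟫) 0 (interior K) := Measure.eqOn_open_of_ae_eq
    (ae_restrict_of_ae_restrict_of_subset interior_subset hv) isOpen_interior
    hcont.continuousOn continuousOn_const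
  have hsub : interior K ⊆ ((ℝ ∙ v)ᗮ : Submodule ℝ E) := fun y hy =>
    Submodule.mem_orthogonal_singleton_iff_inner_left.2 (hzero hy)
  have htop := Submodule.eq_top_of_nonempty_interior' (ℝ ∙ v)ᗮ
    (hK.mono (interior_maximal hsub isOpen_interior))
  exact inner_self_eq_zero.1
    (Submodule.mem_orthogonal_singleton_iff_inner_left.1 (htop ▸ Submodule.mem_top))

lemma omegaR_pos {s : ℝ} (hs : -2 < s) : 0 < omegaR s :=
  div_pos (Real.rpow_pos_of_pos Real.pi_pos _) (Real.Gamma_pos_of_pos (by linarith))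

lemma aOne_pos (n : ℕ) {p : ℝ} (hp : -1 < p) : 0 < aOne n p := by
  have : (0 : ℝ) ≤ n := n.cast_nonneg
  exact div_pos (omegaR_pos (by linarith)) (mul_pos (mul_pos (omegaR_pos (by norm_num))
    (omegaR_pos (by linarith))) (omegaR_pos (by linarith)))

variable {n : ℕ} {p : ℝ} {L : Set (EuclideanSpace ℝ (Fin n))}

/-- The support function of `Γ_p L`, in terms of which `centroidBody n p L` is defined. -/
def centroidSupport (n : ℕ) (p : ℝ) (L : Set (EuclideanSpace ℝ (Fin n)))
    (v : EuclideanSpace ℝ (Fin n)) : ℝ :=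
  ((aOne n p * (volume L).toReal)⁻¹ * ∫ y in L, |⟪v, y⟫| ^ p) ^ (1 / p)

lemma centroidSupport_rpow (hp : 0 < p) (v : EuclideanSpace ℝ (Fin n)) :
    centroidSupport n p L v ^ p = (aOne n p * (volume L).toReal)⁻¹ * ∫ y in L, |⟪v, y⟫| ^ p := by
  have ha := aOne_pos n (by linarith : -1 < p)
  rw [centroidSupport, ← Real.rpow_mul (mul_nonneg (by positivity)
    (integral_nonneg fun _ => by positivity)), one_div_mul_cancel hp.ne', Real.rpow_one]

lemma centroidSupport_eq_const_mul_lpInnerSeminorm (hp : 1 ≤ p) (hL : IsCompact L)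
    (v : EuclideanSpace ℝ (Fin n)) :
    centroidSupport n p L v = (aOne n p * (volume L).toReal)⁻¹ ^ (1 / p) *
      lpInnerSeminorm (ENNReal.one_le_ofReal.2 hp)
        (memLp_id_restrict_of_isCompact (μ := volume) hL _) v := by
  have ha := aOne_pos n (by linarith : -1 < p)
  rw [centroidSupport, Real.mul_rpow (by positivity) (integral_nonneg fun _ => by positivity),
    lpInnerSeminorm_ofReal_apply]
  simp only [id, real_inner_comm]

lemma centroidSupport_smul (hp : 1 ≤ p) (hL : IsCompact L) {t : ℝ} (ht : 0 < t)
    (v : EuclideanSpace ℝ (Fin n)) :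
    centroidSupport n p L (t • v) = t * centroidSupport n p L v := by
  simp only [centroidSupport_eq_const_mul_lpInnerSeminorm hp hL, map_smul_eq_mul,
    Real.norm_of_nonneg ht.le, mul_left_comm]

lemma exists_pos_mul_norm_le_centroidSupport (hp : 1 ≤ p) (hL : IsCompact L)
    (hLi : (interior L).Nonempty) : ∃ m > 0, ∀ v, m * ‖v‖ ≤ centroidSupport n p L v := by
  obtain ⟨m, hm, hle⟩ := exists_pos_mul_norm_le_seminorm fun v hv =>
    eq_zero_of_ae_inner_eq_zero hLi ((lpInnerSeminorm_eq_zero_iff (ENNReal.one_le_ofReal.2 hp)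
      (memLp_id_restrict_of_isCompact (μ := volume) hL _)).1 hv)
  have ha := aOne_pos n (by linarith : -1 < p)
  have hV : 0 < (volume L).toReal := ENNReal.toReal_pos
    (Measure.measure_pos_of_nonempty_interior volume hLi).ne' hL.measure_ne_top
  refine ⟨(aOne n p * (volume L).toReal)⁻¹ ^ (1 / p) * m, by positivity, fun v => ?_⟩
  rw [centroidSupport_eq_const_mul_lpInnerSeminorm hp hL, mul_assoc]
  gcongr
  exact hle v

lemma setOf_legendre_const_mul_centroidSupport_rpow_le_one {q c : ℝ} (hpq : p.HolderConjugate q)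
    (hc : 0 < c) (hL : IsCompact L) (hLi : (interior L).Nonempty) :
    {x | legendre (fun v => c * centroidSupport n p L v ^ p) x ≤ 1} =
      legendreRadius p q c • centroidBody n p L := by
  have hlam := legendreRadius_pos hpq.pos hpq.symm.pos hc
  obtain ⟨m, hm, hle⟩ := exists_pos_mul_norm_le_centroidSupport hpq.lt.le hL hLi
  ext x
  rw [Set.mem_smul_set_iff_inv_smul_mem₀ hlam.ne']
  refine (legendre_const_mul_rpow_le_one_iff hpq hc hm hle
    fun t ht v => centroidSupport_smul hpq.lt.le hL ht v).trans (forall_congr' fun v => ?_)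
  rw [real_inner_smul_left, inv_mul_le_iff₀ hlam, centroidSupport]

end CentroidBody

section DirectionalDerivative

lemma eq_zero_of_fderiv_apply_eq_zero {E F : Type*} [NormedAddCommGroup E] [NormedSpace ℝ E]
    [NormedAddCommGroup F] [NormedSpace ℝ F] {f : E → F} (hf : Differentiable ℝ f)
    (hsupp : HasCompactSupport f) {ξ : E} (hξ : ξ ≠ 0) (h : ∀ y, fderiv ℝ f y ξ = 0) : f = 0 := by
  funext x
  have hderiv (t : ℝ) : HasDerivAt (fun t : ℝ => f (x + t • ξ)) 0 t := by
    have hline : HasDerivAt (fun t : ℝ => x + t • ξ) ξ t := by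
      simpa using ((hasDerivAt_id t).smul_const ξ).const_add x
    exact h (x + t • ξ) ▸ (hf (x + t • ξ)).hasFDerivAt.comp_hasDerivAt t hline
  have hconst (t : ℝ) : f (x + t • ξ) = f x := by
    simpa using is_const_of_deriv_eq_zero (fun t => (hderiv t).differentiableAt)
      (fun t => (hderiv t).deriv) t 0
  have hline : Topology.IsClosedEmbedding fun t : ℝ => x + t • ξ :=
    (Homeomorph.addLeft x).isClosedEmbedding.comp (isClosedEmbedding_smul_left hξ)
  obtain ⟨t, ht⟩ := (Set.ne_univ_iff_exists_notMem _).1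
    (hsupp.comp_isClosedEmbedding hline).isCompact.ne_univ
  exact (hconst t).symm.trans (image_eq_zero_of_notMem_tsupport (f := f ∘ fun t => x + t • ξ) ht)

section Gradient

variable {E : Type*} [NormedAddCommGroup E] [InnerProductSpace ℝ E] [CompleteSpace E] {f : E → ℝ}

lemma continuous_gradient_of_contDiff (hf : ContDiff ℝ 1 f) : Continuous (gradient f) :=
  (InnerProductSpace.toDual ℝ _).symm.continuous.comp (hf.continuous_fderiv one_ne_zero)

lemma hasCompactSupport_gradient (hsupp : HasCompactSupport f) : HasCompactSupport (gradient f) :=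
  (hsupp.fderiv ℝ).comp_left (map_zero (InnerProductSpace.toDual ℝ _).symm)

lemma memLp_gradient [MeasurableSpace E] [BorelSpace E] {μ : Measure E}
    [IsFiniteMeasureOnCompacts μ] (hf : ContDiff ℝ 1 f) (hsupp : HasCompactSupport f)
    (p : ENNReal) : MemLp (gradient f) p μ :=
  (continuous_gradient_of_contDiff hf).memLp_of_hasCompactSupport (hasCompactSupport_gradient hsupp)

lemma eq_zero_of_ae_inner_gradient_eq_zero [MeasurableSpace E] {μ : Measure E}
    [μ.IsOpenPosMeasure] (hf : ContDiff ℝ 1 f)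
    (hsupp : HasCompactSupport f) {ξ : E} (hξ : ξ ≠ 0) (h : ∀ᵐ y ∂μ, ⟪gradient f y, ξ⟫ = 0) :
    f = 0 := by
  have hcont : Continuous fun y => ⟪gradient f y, ξ⟫ :=
    (continuous_gradient_of_contDiff hf).inner continuous_const
  have hzero := hcont.ae_eq_iff_eq μ continuous_zero |>.1 h
  refine eq_zero_of_fderiv_apply_eq_zero (hf.differentiable one_ne_zero) hsupp hξ fun y => ?_
  rw [← inner_gradient_left]
  exact congrFun hzero y

end Gradient

variable {n : ℕ} {p : ℝ} {f : EuclideanSpace ℝ (Fin n) → ℝ}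

/-- `ξ ↦ ‖∇_ξ f‖_p` as a seminorm. -/
def dirDerivSeminorm (hp : 1 ≤ p) (hf : ContDiff ℝ 1 f) (hsupp : HasCompactSupport f) :
    Seminorm ℝ (EuclideanSpace ℝ (Fin n)) :=
  lpInnerSeminorm (ENNReal.one_le_ofReal.2 hp) (memLp_gradient (μ := volume) hf hsupp _)

lemma coe_dirDerivSeminorm (hp : 1 ≤ p) (hf : ContDiff ℝ 1 f) (hsupp : HasCompactSupport f) :
    ⇑(dirDerivSeminorm hp hf hsupp) = dirDerivLpNorm n p f :=
  funext fun ξ => lpInnerSeminorm_ofReal_apply _ _ ξ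

lemma dirDerivSeminorm_eq_zero (hp : 1 ≤ p) (hf : ContDiff ℝ 1 f) (hsupp : HasCompactSupport f)
    (hne : f ≠ 0) (ξ : EuclideanSpace ℝ (Fin n)) (hξ : dirDerivSeminorm hp hf hsupp ξ = 0) :
    ξ = 0 := by
  contrapose! hne
  exact eq_zero_of_ae_inner_gradient_eq_zero hf hsupp hne
    ((lpInnerSeminorm_eq_zero_iff _ _).1 hξ)

lemma dirDerivLpNorm_pos (hp : 1 ≤ p) (hf : ContDiff ℝ 1 f) (hsupp : HasCompactSupport f)
    (hne : f ≠ 0) {ξ : EuclideanSpace ℝ (Fin n)} (hξ : ξ ≠ 0) : 0 < dirDerivLpNorm n p f ξ := by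
  rw [← coe_dirDerivSeminorm hp hf hsupp]
  exact (apply_nonneg _ ξ).lt_of_ne' (mt (dirDerivSeminorm_eq_zero hp hf hsupp hne ξ) hξ)

lemma dirDerivLpNorm_smul (hp : 1 ≤ p) (hf : ContDiff ℝ 1 f) (hsupp : HasCompactSupport f) {r : ℝ}
    (hr : 0 < r) (ξ : EuclideanSpace ℝ (Fin n)) :
    dirDerivLpNorm n p f (r • ξ) = r * dirDerivLpNorm n p f ξ := by
  rw [← coe_dirDerivSeminorm hp hf hsupp, map_smul_eq_mul, Real.norm_of_nonneg hr.le]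

lemma dirDerivLpNorm_rpow (hp : p ≠ 0) (ξ : EuclideanSpace ℝ (Fin n)) :
    dirDerivLpNorm n p f ξ ^ p = ∫ y, |⟪gradient f y, ξ⟫| ^ p := by
  rw [dirDerivLpNorm, ← Real.rpow_mul (integral_nonneg fun _ => by positivity),
    one_div_mul_cancel hp, Real.rpow_one]

/-- The paper's `L_f`, the unit ball of `ξ ↦ ‖∇_ξ f‖_p`. -/
def dirDerivUnitBall (n : ℕ) (p : ℝ) (f : EuclideanSpace ℝ (Fin n) → ℝ) :
    Set (EuclideanSpace ℝ (Fin n)) :=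
  {ξ | dirDerivLpNorm n p f ξ ≤ 1}

lemma closedBall_dirDerivSeminorm (hp : 1 ≤ p) (hf : ContDiff ℝ 1 f)
    (hsupp : HasCompactSupport f) :
    (dirDerivSeminorm hp hf hsupp).closedBall 0 1 = dirDerivUnitBall n p f := by
  rw [Seminorm.closedBall_zero_eq, coe_dirDerivSeminorm, dirDerivUnitBall]

lemma isCompact_dirDerivUnitBall (hp : 1 ≤ p) (hf : ContDiff ℝ 1 f) (hsupp : HasCompactSupport f)
    (hne : f ≠ 0) : IsCompact (dirDerivUnitBall n p f) :=
  closedBall_dirDerivSeminorm hp hf hsupp ▸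
    isCompact_seminorm_closedBall_zero (dirDerivSeminorm_eq_zero hp hf hsupp hne) 1

lemma convex_dirDerivUnitBall (hp : 1 ≤ p) (hf : ContDiff ℝ 1 f) (hsupp : HasCompactSupport f) :
    Convex ℝ (dirDerivUnitBall n p f) :=
  closedBall_dirDerivSeminorm hp hf hsupp ▸ Seminorm.convex_closedBall _ _ _

lemma zero_mem_interior_dirDerivUnitBall (hp : 1 ≤ p) (hf : ContDiff ℝ 1 f)
    (hsupp : HasCompactSupport f) : 0 ∈ interior (dirDerivUnitBall n p f) := by
  rw [← closedBall_dirDerivSeminorm hp hf hsupp, mem_interior_iff_mem_nhds]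
  exact Filter.mem_of_superset
    (Seminorm.ball_mem_nhds (continuous_seminorm_of_finiteDimensional _) one_pos)
    (Seminorm.ball_subset_closedBall _ _ _)

lemma volume_dirDerivUnitBall_toReal_pos (hp : 1 ≤ p) (hf : ContDiff ℝ 1 f)
    (hsupp : HasCompactSupport f) (hne : f ≠ 0) : 0 < (volume (dirDerivUnitBall n p f)).toReal :=
  ENNReal.toReal_pos
    (Measure.measure_pos_of_nonempty_interior volume
      ⟨0, zero_mem_interior_dirDerivUnitBall hp hf hsupp⟩).ne'
    (isCompact_dirDerivUnitBall hp hf hsupp hne).measure_ne_top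

end DirectionalDerivative

section KeyInequality

variable {n : ℕ} {p : ℝ} {f : EuclideanSpace ℝ (Fin n) → ℝ}

lemma integral_Cfstar_gradient (hp : 1 ≤ p) (hf : ContDiff ℝ 1 f) (hsupp : HasCompactSupport f)
    (hne : f ≠ 0) :
    ∫ x, Cfstar n p f (gradient f x) =
      ∫ ξ : Metric.sphere (0 : EuclideanSpace ℝ (Fin n)) 1, dirDerivLpNorm n p f ξ ^ (-(n : ℝ))
        ∂(volume : Measure (EuclideanSpace ℝ (Fin n))).toSphere := by
  have hp0 : 0 < p := by linarith
  have hgrad := continuous_gradient_of_contDiff hf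
  have hnorm : Continuous (dirDerivLpNorm n p f) :=
    coe_dirDerivSeminorm hp hf hsupp ▸ continuous_seminorm_of_finiteDimensional _
  have hpos (ξ : Metric.sphere (0 : EuclideanSpace ℝ (Fin n)) 1) : 0 < dirDerivLpNorm n p f ξ :=
    dirDerivLpNorm_pos hp hf hsupp hne (ne_zero_of_mem_unit_sphere ξ)
  simp only [Cfstar]
  rw [integral_integral_swap_of_hasCompactSupport]
  · refine integral_congr_ae (.of_forall fun ξ => ?_)
    simp only [integral_const_mul, ← dirDerivLpNorm_rpow hp0.ne']
    rw [← Real.rpow_add (hpos ξ)]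
    ring_nf
  · refine ((hnorm.comp (continuous_subtype_val.comp continuous_snd)).rpow_const
      fun z => Or.inl (hpos z.2).ne').mul (Continuous.rpow_const ?_ fun _ => Or.inr hp0.le)
    exact ((hgrad.comp continuous_fst).inner (continuous_subtype_val.comp continuous_snd)).abs
  · refine HasCompactSupport.intro
      ((hasCompactSupport_gradient hsupp).isCompact.prod isCompact_univ) fun z hz => ?_
    have hz1 : z.1 ∉ tsupport (gradient f) := fun h => hz ⟨h, Set.mem_univ _⟩
    simp [Function.uncurry, image_eq_zero_of_notMem_tsupport hz1, Real.zero_rpow hp0.ne']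

variable [NeZero n]

lemma setIntegral_dirDerivUnitBall (hp : 1 ≤ p) (hf : ContDiff ℝ 1 f)
    (hsupp : HasCompactSupport f) (hne : f ≠ 0) {F : EuclideanSpace ℝ (Fin n) → ℝ} {s : ℝ}
    (hs : 0 < n + s) (hFc : Continuous F)
    (hF : ∀ r : ℝ, 0 < r → ∀ ξ, F (r • ξ) = r ^ s * F ξ) :
    ∫ ξ in dirDerivUnitBall n p f, F ξ = (n + s)⁻¹ *
      ∫ ξ : Metric.sphere (0 : EuclideanSpace ℝ (Fin n)) 1,
        dirDerivLpNorm n p f ξ ^ (-(n + s)) * F ξ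
        ∂(volume : Measure (EuclideanSpace ℝ (Fin n))).toSphere := by
  have hL := isCompact_dirDerivUnitBall hp hf hsupp hne
  simpa only [dirDerivUnitBall, finrank_euclideanSpace, Fintype.card_fin] using
    setIntegral_sublevel_of_homogeneous volume (by simpa using hs)
      (fun ξ => dirDerivLpNorm_pos hp hf hsupp hne)
      (fun r hr => dirDerivLpNorm_smul hp hf hsupp hr) hF hL.measurableSet
      (hFc.continuousOn.integrableOn_compact hL)

lemma integral_toSphere_dirDerivLpNorm_rpow (hp : 1 ≤ p) (hf : ContDiff ℝ 1 f)
    (hsupp : HasCompactSupport f) (hne : f ≠ 0) :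
    ∫ ξ : Metric.sphere (0 : EuclideanSpace ℝ (Fin n)) 1, dirDerivLpNorm n p f ξ ^ (-(n : ℝ))
        ∂(volume : Measure (EuclideanSpace ℝ (Fin n))).toSphere =
      n * (volume (dirDerivUnitBall n p f)).toReal := by
  have hn : (0 : ℝ) < n := Nat.cast_pos.2 (NeZero.pos n)
  have h := setIntegral_dirDerivUnitBall (F := fun _ => 1) (s := 0) hp hf hsupp hne
    (by simpa only [add_zero] using hn) continuous_const (by simp)
  simp only [add_zero, mul_one, setIntegral_const, smul_eq_mul, measureReal_def] at h
  rw [h, mul_inv_cancel_left₀ hn.ne']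

lemma Cfstar_eq_setIntegral (hp : 1 ≤ p) (hf : ContDiff ℝ 1 f) (hsupp : HasCompactSupport f)
    (hne : f ≠ 0) (v : EuclideanSpace ℝ (Fin n)) :
    Cfstar n p f v = (n + p) * ∫ y in dirDerivUnitBall n p f, |⟪v, y⟫| ^ p := by
  have hp0 : 0 < p := by linarith
  have hnp : 0 < n + p := by positivity
  rw [setIntegral_dirDerivUnitBall hp hf hsupp hne hnp
    ((continuous_const.inner continuous_id').abs.rpow_const fun _ => Or.inr hp0.le)
    fun r hr ξ => by
      rw [inner_smul_right, abs_mul, abs_of_pos hr, Real.mul_rpow hr.le (abs_nonneg _)],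
    mul_inv_cancel_left₀ hnp.ne', Cfstar]

lemma Cfstar_eq_const_mul_centroidSupport_rpow (hp : 1 ≤ p) (hf : ContDiff ℝ 1 f)
    (hsupp : HasCompactSupport f) (hne : f ≠ 0) (v : EuclideanSpace ℝ (Fin n)) :
    Cfstar n p f v = (n + p) * (aOne n p * (volume (dirDerivUnitBall n p f)).toReal) *
      centroidSupport n p (dirDerivUnitBall n p f) v ^ p := by
  have hV := volume_dirDerivUnitBall_toReal_pos hp hf hsupp hne
  have ha := aOne_pos n (by linarith : -1 < p)
  rw [Cfstar_eq_setIntegral hp hf hsupp hne, centroidSupport_rpow (by linarith), mul_assoc,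
    mul_inv_cancel_left₀ (mul_pos ha hV).ne']

lemma setOf_legendre_Cfstar_le_one {q : ℝ} (hpq : p.HolderConjugate q) (hf : ContDiff ℝ 1 f)
    (hsupp : HasCompactSupport f) (hne : f ≠ 0) :
    {x | legendre (Cfstar n p f) x ≤ 1} =
      legendreRadius p q ((n + p) * (aOne n p * (volume (dirDerivUnitBall n p f)).toReal)) •
        centroidBody n p (dirDerivUnitBall n p f) := by
  have hp := hpq.lt.le
  have hV := volume_dirDerivUnitBall_toReal_pos hp hf hsupp hne
  have ha := aOne_pos n (by linarith : -1 < p)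
  rw [funext (Cfstar_eq_const_mul_centroidSupport_rpow hp hf hsupp hne)]
  exact setOf_legendre_const_mul_centroidSupport_rpow_le_one hpq (by positivity)
    (isCompact_dirDerivUnitBall hp hf hsupp hne) ⟨0, zero_mem_interior_dirDerivUnitBall hp hf hsupp⟩

lemma volume_setOf_legendre_Cfstar_le_one {q : ℝ} (hpq : p.HolderConjugate q)
    (hf : ContDiff ℝ 1 f) (hsupp : HasCompactSupport f) (hne : f ≠ 0) :
    (volume {x | legendre (Cfstar n p f) x ≤ 1}).toReal =
      legendreRadius p q ((n + p) * (aOne n p * (volume (dirDerivUnitBall n p f)).toReal)) ^ n *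
        (volume (centroidBody n p (dirDerivUnitBall n p f))).toReal := by
  have hV := volume_dirDerivUnitBall_toReal_pos hpq.lt.le hf hsupp hne
  have ha := aOne_pos n (by linarith [hpq.pos] : -1 < p)
  have hp := hpq.pos
  have hlam := legendreRadius_pos hp hpq.symm.pos
    (by positivity : 0 < (n + p) * (aOne n p * (volume (dirDerivUnitBall n p f)).toReal))
  rw [setOf_legendre_Cfstar_le_one hpq hf hsupp hne, Measure.addHaar_smul, finrank_euclideanSpace,
    Fintype.card_fin, abs_of_pos (pow_pos hlam n), ENNReal.toReal_mul,
    ENNReal.toReal_ofReal (pow_pos hlam n).le]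

lemma Zp_rpow (hp : 1 ≤ p) (hf : ContDiff ℝ 1 f) (hsupp : HasCompactSupport f) (hne : f ≠ 0) :
    Zp n p f ^ p = (n * (volume (dirDerivUnitBall n p f)).toReal) ^ (-(p / n)) := by
  rw [Zp, integral_toSphere_dirDerivLpNorm_rpow hp hf hsupp hne, ← Real.rpow_mul (by positivity)]
  ring_nf

theorem key_inequality_general (n : ℕ) [NeZero n] (p q : ℝ) (hpq : p.HolderConjugate q)
    (f : EuclideanSpace ℝ (Fin n) → ℝ) (hf : ContDiff ℝ 1 f) (hsupp : HasCompactSupport f)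
    (hne : f ≠ 0)
    (hBP : (volume (dirDerivUnitBall n p f)).toReal ≤
      (volume (centroidBody n p (dirDerivUnitBall n p f))).toReal) :
    (volume {x : EuclideanSpace ℝ (Fin n) | legendre (Cfstar n p f) x ≤ 1}).toReal
        ^ (-(p / (n : ℝ))) * (∫ x, Cfstar n p f (gradient f x)) ≤
      (q ^ (-(p / q)) * p⁻¹) * (n : ℝ) ^ (((n : ℝ) + p) / (n : ℝ)) / (aOne n p * ((n : ℝ) + p)) *
        Zp n p f ^ p := by
  have hp := hpq.pos
  have hq := hpq.symm.pos
  have hn : (0 : ℝ) < n := Nat.cast_pos.2 (NeZero.pos n)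
  have ha := aOne_pos n (by linarith : -1 < p)
  rw [volume_setOf_legendre_Cfstar_le_one hpq hf hsupp hne,
    integral_Cfstar_gradient hpq.lt.le hf hsupp hne, Zp_rpow hpq.lt.le hf hsupp hne,
    integral_toSphere_dirDerivLpNorm_rpow hpq.lt.le hf hsupp hne]
  have hV := volume_dirDerivUnitBall_toReal_pos hpq.lt.le hf hsupp hne
  set V := (volume (dirDerivUnitBall n p f)).toReal
  have hc : 0 < (n + p) * (aOne n p * V) := by positivity
  have hlam := legendreRadius_pos hp hq hc
  calc
    _ ≤ (legendreRadius p q ((n + p) * (aOne n p * V)) ^ n * V) ^ (-(p / (n : ℝ))) * (n * V) := by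
      gcongr ?_ * _
      exact Real.rpow_le_rpow_of_nonpos (by positivity) (by gcongr)
        (neg_nonpos.2 (by positivity))
    _ = q ^ (-(p / q)) * ((n + p) * (aOne n p * V) * p)⁻¹ * V ^ (-(p / (n : ℝ))) * (n * V) := by
      rw [legendreRadius_pow_mul_rpow (NeZero.ne n) hp hq hc hV.le]
    _ = _ := by
      rw [Real.mul_rpow hn.le hV.le, add_div, div_self hn.ne', Real.rpow_add hn, Real.rpow_one,
        Real.rpow_neg hn.le]
      field_simp

end KeyInequality

/-- Key inequality: assuming the `L_p` Busemann-Petty centroid inequality, for any nonzero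
smooth compactly supported `f` one has
`vol(K_f)^{-p/n} ∫ C_f*(∇f) dx ≤ a₂ Z_p(f)^p`, `a₂ = ℓ_q n^{(n+p)/n} / (a₁ (n+p))`. -/
theorem key_inequality (n : ℕ) (hn : 1 ≤ n) (p q : ℝ) (hp : 1 < p)
    (hpq : 1 / p + 1 / q = 1) (f : EuclideanSpace ℝ (Fin n) → ℝ) (hf : ContDiff ℝ (⊤ : ℕ∞) f)
    (hsupp : HasCompactSupport f) (hne : f ≠ 0)
    (hBP : ∀ K : Set (EuclideanSpace ℝ (Fin n)), IsCompact K → Convex ℝ K →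
      (0 : EuclideanSpace ℝ (Fin n)) ∈ interior K →
      (volume K).toReal ≤ (volume (centroidBody n p K)).toReal) :
    (volume {x : EuclideanSpace ℝ (Fin n) | legendre (Cfstar n p f) x ≤ 1}).toReal
        ^ (-(p / (n : ℝ))) * (∫ x, Cfstar n p f (gradient f x)) ≤
      (q ^ (-(p / q)) * p⁻¹) * (n : ℝ) ^ (((n : ℝ) + p) / (n : ℝ)) / (aOne n p * ((n : ℝ) + p)) *
        Zp n p f ^ p := by
  have : NeZero n := ⟨by omega⟩
  have hf1 : ContDiff ℝ 1 f := hf.of_le (by simp)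
  exact key_inequality_general n p q
    (Real.holderConjugate_iff.2 ⟨hp, by simpa only [one_div] using hpq⟩) f hf1 hsupp hne
    (hBP _ (isCompact_dirDerivUnitBall hp.le hf1 hsupp hne)
      (convex_dirDerivUnitBall hp.le hf1 hsupp)
      (zero_mem_interior_dirDerivUnitBall hp.le hf1 hsupp))
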